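/- Let 𝒢 = {A_1, …, A_k} ⊂ UT(4,ℤ) with A_i = UT(α_i, β_i, κ_i; δ_i, ε_i, φ_i). Suppose the ℝ≥0-cone C generated by φ0(A_1), …, φ0(A_k) is a linear subspace of ℝ³ of dimension 2 (C = C ∩ (−C), dim C = 2), and let p, q, r ∈ ℤ with at most one of p, q, r equal to zero satisfy p α_i + q β_i + r κ_i = 0 for i = 1, …, k. If supp(L_0) = {1, …, k} (i.e., for every j there exists ℓ ∈ L_0 with ℓ_j > 0), then the identity matrix belongs to ⟨𝒢⟩. -/

import Mathlib

open Finset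

/-- The 4×4 upper unitriangular integer matrix `UT(a,b,c;d,e,f)`. -/
def UT (a b c d e f : ℤ) : Matrix (Fin 4) (Fin 4) ℤ :=
  !![1, a, d, f; 0, 1, b, e; 0, 0, 1, c; 0, 0, 0, 1]

/-- `φ0 : UT(4,ℤ) → ℤ³`, `UT(a,b,c;d,e,f) ↦ (a,b,c)`. -/
def phi0 (M : Matrix (Fin 4) (Fin 4) ℤ) : Fin 3 → ℤ :=
  ![M 0 1, M 1 2, M 2 3]

/-- `φ0` followed by the embedding `ℤ³ → ℝ³`. -/
def phi0R (M : Matrix (Fin 4) (Fin 4) ℤ) : Fin 3 → ℝ :=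
  fun i => (phi0 M i : ℝ)

/-- The `ℝ≥0`-cone generated by a finite family of vectors in `ℝⁿ`. -/
def coneFin {k n : ℕ} (v : Fin k → (Fin n → ℝ)) : Set (Fin n → ℝ) :=
  {x | ∃ r : Fin k → ℝ, (∀ i, 0 ≤ r i) ∧ x = ∑ i, r i • v i}

/-- Membership of an exponent vector `ℓ` in `L_0`:
`Σ ℓᵢ φ0(Aᵢ) = 0` and `p Σ ℓᵢΔᵢ − r Σ ℓᵢℰᵢ = 0`, where `Δᵢ = δᵢ − ½αᵢβᵢ` and
`ℰᵢ = εᵢ − ½βᵢκᵢ`. -/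
def InL0 {k : ℕ} (A : Fin k → Matrix (Fin 4) (Fin 4) ℤ)
    (α β κ δ ε : Fin k → ℤ) (p r : ℤ) (ℓ : Fin k → ℕ) : Prop :=
  (∑ i, (ℓ i : ℤ) • phi0 (A i) = 0) ∧
    (p : ℚ) * ∑ i, (ℓ i : ℚ) * ((δ i : ℚ) - (1 / 2) * (α i : ℚ) * (β i : ℚ))
      - (r : ℚ) * ∑ i, (ℓ i : ℚ) * ((ε i : ℚ) - (1 / 2) * (β i : ℚ) * (κ i : ℚ))
      = 0

theorem UT_mul (a b c d e f a' b' c' d' e' f' : ℤ) :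
    UT a b c d e f * UT a' b' c' d' e' f' =
      UT (a + a') (b + b') (c + c') (d + d' + a * b') (e + e' + b * c')
        (f + f' + a * e' + d * c') := by
  ext i j
  fin_cases i <;> fin_cases j <;>
    simp [UT, Matrix.mul_apply, Fin.sum_univ_four] <;> ring

theorem UT_one : UT 0 0 0 0 0 0 = 1 := by
  ext i j
  fin_cases i <;> fin_cases j <;> simp [UT]

/-- Element of `S` in the plane with recorded abelian invariants. -/
def GoodEl (S : Subsemigroup (Matrix (Fin 4) (Fin 4) ℤ)) (p q r : ℤ)
    (g : Matrix (Fin 4) (Fin 4) ℤ) (a b c T s : ℤ) : Prop :=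
  g ∈ S ∧ ∃ d e f : ℤ, g = UT a b c d e f ∧ p * a + q * b + r * c = 0 ∧
    p * (2 * d - a * b) - r * (2 * e - b * c) = T ∧
    r * (2 * d - a * b) + p * (2 * e - b * c) = s

/-- The commutator form. -/
def omg (p r a b c a' b' c' : ℤ) : ℤ :=
  r * (a * b' - a' * b) + p * (b * c' - b' * c)

section

variable {S : Subsemigroup (Matrix (Fin 4) (Fin 4) ℤ)} {p q r : ℤ}

theorem GoodEl.mul {g g' : Matrix (Fin 4) (Fin 4) ℤ} {a b c T s a' b' c' T' s' : ℤ}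
    (h : GoodEl S p q r g a b c T s) (h' : GoodEl S p q r g' a' b' c' T' s') :
    GoodEl S p q r (g * g') (a + a') (b + b') (c + c') (T + T')
      (s + s' + omg p r a b c a' b' c') := by
  obtain ⟨hg, d, e, f, rfl, hp, hT, hs⟩ := h
  obtain ⟨hg', d', e', f', rfl, hp', hT', hs'⟩ := h'
  refine ⟨S.mul_mem hg hg', _, _, _, UT_mul .., ?_, ?_, ?_⟩
  · linear_combination hp + hp'
  · linear_combination hT + hT' + b' * hp - b * hp'
  · unfold omg
    linear_combination hs + hs'

theorem GoodEl.pow {g : Matrix (Fin 4) (Fin 4) ℤ} {a b c T s : ℤ}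
    (h : GoodEl S p q r g a b c T s) (m : ℕ) :
    GoodEl S p q r (g ^ (m + 1)) ((m + 1) * a) ((m + 1) * b) ((m + 1) * c) ((m + 1) * T)
      ((m + 1) * s) := by
  induction m with
  | zero => simpa using h
  | succ m ih =>
    have := ih.mul h
    rw [pow_succ]
    convert this using 1 <;> push_cast <;> (try unfold omg) <;> ring

theorem UT_central_pow (d e f : ℤ) (m : ℕ) :
    UT 0 0 0 d e f ^ m = UT 0 0 0 (m * d) (m * e) (m * f) := by
  induction m with
  | zero => simp [UT_one]
  | succ m ih =>
    rw [pow_succ, ih, UT_mul]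
    congr 1 <;> push_cast <;> ring

theorem spow_mem {M : Type*} [Monoid M] {S : Subsemigroup M} {g : M} (h : g ∈ S) {m : ℕ}
    (hm : 0 < m) : g ^ m ∈ S := by
  obtain ⟨m, rfl⟩ : ∃ n, m = n + 1 := ⟨m - 1, by omega⟩
  clear hm
  induction m with
  | zero => simpa using h
  | succ m ih => rw [pow_succ]; exact S.mul_mem ih h

/-- Closed element of `S`. -/
def Cl (S : Subsemigroup (Matrix (Fin 4) (Fin 4) ℤ)) (p r d e f : ℤ) : Prop :=
  UT 0 0 0 d e f ∈ S ∧ p * d = r * e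

theorem Cl.comb {d e f d' e' f' : ℤ} (h : Cl S p r d e f) (h' : Cl S p r d' e' f')
    {m n : ℤ} (hm : 0 < m) (hn : 0 < n) :
    Cl S p r (m * d + n * d') (m * e + n * e') (m * f + n * f') := by
  obtain ⟨m, rfl⟩ := Int.eq_ofNat_of_zero_le hm.le
  obtain ⟨n, rfl⟩ := Int.eq_ofNat_of_zero_le hn.le
  refine ⟨?_, by linear_combination (m : ℤ) * h.2 + (n : ℤ) * h'.2⟩
  have := S.mul_mem (spow_mem h.1 (m := m) (by exact_mod_cast hm))
    (spow_mem h'.1 (m := n) (by exact_mod_cast hn))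
  rw [UT_central_pow, UT_central_pow, UT_mul] at this
  simpa using this

theorem zero_of_sigma (hpr : 0 < p ^ 2 + r ^ 2) {d e : ℤ} (h1 : p * d = r * e)
    (h2 : r * d + p * e = 0) : d = 0 ∧ e = 0 := by
  constructor
  · have : (p ^ 2 + r ^ 2) * d = 0 := by linear_combination p * h1 + r * h2
    rcases mul_eq_zero.1 this with h | h
    · omega
    · exact h
  · have : (p ^ 2 + r ^ 2) * e = 0 := by linear_combination p * h2 - r * h1
    rcases mul_eq_zero.1 this with h | h
    · omega
    · exact h

theorem vert (hpr : 0 < p ^ 2 + r ^ 2) {d e f d' e' f' : ℤ}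
    (h : Cl S p r d e f) (h' : Cl S p r d' e' f')
    (hs : 0 < r * d + p * e) (hs' : r * d' + p * e' < 0) :
    Cl S p r 0 0 (-(r * d' + p * e') * f + (r * d + p * e) * f') := by
  have := h.comb h' (neg_pos.2 hs') hs
  have h0 := zero_of_sigma hpr this.2 (by ring)
  rw [h0.1, h0.2] at this
  exact this

theorem quad_one (hpr : 0 < p ^ 2 + r ^ 2)
    (hpos : ∃ d e f, Cl S p r d e f ∧ 0 < r * d + p * e ∧ 0 < f)
    (hpos' : ∃ d e f, Cl S p r d e f ∧ 0 < r * d + p * e ∧ f < 0)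
    (hneg : ∃ d e f, Cl S p r d e f ∧ r * d + p * e < 0 ∧ 0 < f)
    (hneg' : ∃ d e f, Cl S p r d e f ∧ r * d + p * e < 0 ∧ f < 0) :
    (1 : Matrix (Fin 4) (Fin 4) ℤ) ∈ S := by
  obtain ⟨d1, e1, f1, c1, s1, t1⟩ := hpos
  obtain ⟨d2, e2, f2, c2, s2, t2⟩ := hpos'
  obtain ⟨d3, e3, f3, c3, s3, t3⟩ := hneg
  obtain ⟨d4, e4, f4, c4, s4, t4⟩ := hneg'
  have v1 := vert hpr c1 c3 s1 s3
  have v2 := vert hpr c2 c4 s2 s4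
  have w1 : 0 < -(r * d3 + p * e3) * f1 + (r * d1 + p * e1) * f3 := by
    have := mul_pos (neg_pos.2 s3) t1
    have := mul_pos s1 t3
    linarith
  have w2 : -(r * d4 + p * e4) * f2 + (r * d2 + p * e2) * f4 < 0 := by
    have := mul_neg_of_pos_of_neg (neg_pos.2 s4) t2
    have := mul_neg_of_pos_of_neg s2 t4
    linarith
  have := (v1.comb v2 (neg_pos.2 w2) w1).1
  rw [← UT_one]
  convert this using 1
  congr 1 <;> ring

/-- Conjugation-type trick. -/
theorem shift {a b c T s T' s' d e f : ℤ} {U V : Matrix (Fin 4) (Fin 4) ℤ}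
    (hU : GoodEl S p q r U a b c T s) (hV : GoodEl S p q r V (-a) (-b) (-c) T' s')
    (hT : T + T' = 0) (hW : Cl S p r d e f) :
    ∃ d3 e3 f3 : ℤ, ∀ M : ℤ, 0 < M →
      Cl S p r (d3 + M * d) (e3 + M * e) (f3 + M * (f + (a * e - d * c))) := by
  obtain ⟨hg, d1, e1, f1, rfl, hp, hT1, hs⟩ := hU
  obtain ⟨hg', d2, e2, f2, rfl, hp', hT2, hs'⟩ := hV
  refine ⟨d1 + d2 - a * b, e1 + e2 - b * c, f1 + f2 + a * e2 - d1 * c, fun M hM => ?_⟩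
  obtain ⟨M, rfl⟩ := Int.eq_ofNat_of_zero_le hM.le
  refine ⟨?_, ?_⟩
  · have := S.mul_mem (S.mul_mem hg (spow_mem hW.1 (m := M) (by exact_mod_cast hM))) hg'
    rw [UT_central_pow, UT_mul, UT_mul] at this
    convert this using 1
    congr 1 <;> push_cast <;> ring
  · have := hW.2
    have h2 : 2 * (p * (d1 + d2 - a * b + M * d)) = 2 * (r * (e1 + e2 - b * c + M * e)) := by
      linear_combination hT1 + hT2 + hT + 2 * (M : ℤ) * this
    linarith

theorem shift_pos {a b c T s T' s' d e f : ℤ} {U V : Matrix (Fin 4) (Fin 4) ℤ}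
    (hU : GoodEl S p q r U a b c T s) (hV : GoodEl S p q r V (-a) (-b) (-c) T' s')
    (hT : T + T' = 0) (hW : Cl S p r d e f) (x y : ℤ)
    (hσ : 0 < x * (r * d + p * e)) (hμ : 0 < y * (a * e - d * c)) (hy : y = 1 ∨ y = -1)
    (hx : x = 1 ∨ x = -1) :
    ∃ d e f, Cl S p r d e f ∧ 0 < x * (r * d + p * e) ∧ 0 < y * f := by
  have hU' := hU.pow f.natAbs
  have hV' := hV.pow f.natAbs
  rw [mul_neg, mul_neg, mul_neg] at hV'
  obtain ⟨d3, e3, f3, h⟩ := shift hU' hV' (by linear_combination ((f.natAbs : ℤ) + 1) * hT) hW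
  set m : ℤ := (f.natAbs : ℤ) + 1 with hm
  have hM : (0 : ℤ) < |f3| + |r * d3 + p * e3| + 1 := by positivity
  refine ⟨_, _, _, h _ hM, ?_, ?_⟩
  · have h1 : -|r * d3 + p * e3| ≤ x * (r * d3 + p * e3) := by
      rcases hx with rfl | rfl
      · simpa using neg_abs_le _
      · have := le_abs_self (r * d3 + p * e3)
        linarith
    have h2 := abs_nonneg f3
    have h3 : |f3| + |r * d3 + p * e3| + 1 ≤
      (|f3| + |r * d3 + p * e3| + 1) * (x * (r * d + p * e)) :=
      le_mul_of_one_le_right hM.le hσ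
    linarith
  · have h1 : -|f3| ≤ y * f3 := by
      rcases hy with rfl | rfl
      · simpa using neg_abs_le _
      · have := le_abs_self f3
        linarith
    have h1' : -|f| ≤ y * f := by
      rcases hy with rfl | rfl
      · simpa using neg_abs_le _
      · have := le_abs_self f
        linarith
    have hmf : m = |f| + 1 := by rw [hm, Int.natCast_natAbs]
    have h4 : m ≤ m * (y * (a * e - d * c)) :=
      le_mul_of_one_le_right (by rw [hmf]; positivity) hμ
    have h5 : 1 ≤ y * f + m * (y * (a * e - d * c)) := by linarith
    have h2 := abs_nonneg (r * d3 + p * e3)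
    have h3 : |f3| + |r * d3 + p * e3| + 1 ≤
      (|f3| + |r * d3 + p * e3| + 1) * (y * f + m * (y * (a * e - d * c))) :=
      le_mul_of_one_le_right hM.le h5
    linarith

/-- both signs of `f` from one closed element. -/
theorem both_signs (hpr : 0 < p ^ 2 + r ^ 2) {a b c T s T' s' d e f : ℤ}
    {U V : Matrix (Fin 4) (Fin 4) ℤ}
    (hU : GoodEl S p q r U a b c T s) (hV : GoodEl S p q r V (-a) (-b) (-c) T' s')
    (hT : T + T' = 0) (hl : p * a - r * c ≠ 0) (hW : Cl S p r d e f) (x y : ℤ)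
    (hσ : 0 < x * (r * d + p * e)) (hy : y = 1 ∨ y = -1) (hx : x = 1 ∨ x = -1) :
    ∃ d e f, Cl S p r d e f ∧ 0 < x * (r * d + p * e) ∧ 0 < y * f := by
  have hμ : y * (a * e - d * c) ≠ 0 := by
    intro h0
    have h1 : (p * a - r * c) * (r * d + p * e) = 0 := by
      have : a * e - d * c = 0 := by rcases hy with rfl | rfl <;> linarith
      linear_combination (p ^ 2 + r ^ 2) * this + (a * r + c * p) * hW.2
    rcases mul_eq_zero.1 h1 with h | h
    · exact hl h
    · rw [h] at hσ; simp at hσ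
  rcases lt_or_gt_of_ne hμ with h | h
  · refine shift_pos hV (by simpa using hU) (by linarith) hW x y hσ ?_ hy hx
    linarith
  · exact shift_pos hU hV hT hW x y hσ h hy hx

theorem core (hpr : 0 < p ^ 2 + r ^ 2) {k : ℕ} (A : Fin k → Matrix (Fin 4) (Fin 4) ℤ)
    (α β κ T s : Fin k → ℤ)
    (hA : ∀ i, GoodEl S p q r (A i) (α i) (β i) (κ i) (T i) (s i))
    (ℓ : Fin k → ℤ) (hℓ : ∀ i, 3 ≤ ℓ i)
    (ha : ∑ i, ℓ i * α i = 0) (hb : ∑ i, ℓ i * β i = 0) (hc : ∑ i, ℓ i * κ i = 0)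
    (hT : ∑ i, ℓ i * T i = 0)
    (i j : Fin k) (hω : omg p r (α i) (β i) (κ i) (α j) (β j) (κ j) ≠ 0)
    (i' : Fin k) (hl : p * α i' - r * κ i' ≠ 0) :
    (1 : Matrix (Fin 4) (Fin 4) ℤ) ∈ S := by
  -- existence of words
  have words : ∀ n : Fin k → ℤ, (∀ i, 1 ≤ n i) → ∃ g t, GoodEl S p q r g
      (∑ i, n i * α i) (∑ i, n i * β i) (∑ i, n i * κ i) (∑ i, n i * T i) t := by
    intro n hn
    have one : ∀ i, ∃ g t, GoodEl S p q r g (n i * α i) (n i * β i) (n i * κ i) (n i * T i) t := by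
      intro i
      have := (hA i).pow (n i - 1).natAbs
      have h2 : (((n i - 1).natAbs : ℕ) : ℤ) + 1 = n i := by have := hn i; omega
      rw [h2] at this
      exact ⟨_, _, this⟩
    have hne : (Finset.univ : Finset (Fin k)).Nonempty := ⟨i, Finset.mem_univ _⟩
    refine Finset.Nonempty.cons_induction (motive := fun t _ => ∃ g u, GoodEl S p q r g
      (∑ i ∈ t, n i * α i) (∑ i ∈ t, n i * β i) (∑ i ∈ t, n i * κ i) (∑ i ∈ t, n i * T i) u)
      ?_ ?_ hne
    · intro a
      simpa using one a
    · intro a t hat _ ih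
      obtain ⟨g, u, hg⟩ := ih
      obtain ⟨g', u', hg'⟩ := one a
      simp only [Finset.sum_cons]
      exact ⟨_, _, hg'.mul hg⟩
  have hij : i ≠ j := by
    rintro rfl
    apply hω
    unfold omg
    ring
  -- complement of a generator
  obtain ⟨V, sV, hV⟩ := words (fun m => ℓ m - if m = i' then 1 else 0) (by
    intro m
    have := hℓ m
    split_ifs <;> omega)
  obtain ⟨Z, sZ, hZ⟩ := words (fun m => ℓ m - (if m = i then 1 else 0) - if m = j then 1 else 0) (by
    intro m
    have := hℓ m
    split_ifs <;> omega)
  simp only [sub_mul, Finset.sum_sub_distrib, ite_mul, one_mul, zero_mul, Finset.sum_ite_eq',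
    Finset.mem_univ, if_true, ha, hb, hc, hT, zero_sub] at hV hZ
  -- closed elements
  have tri : ∀ i j : Fin k, GoodEl S p q r Z (-α i - α j) (-β i - β j) (-κ i - κ j) (-T i - T j) sZ →
      0 < omg p r (α i) (β i) (κ i) (α j) (β j) (κ j) → ∀ n : ℕ, (n : ℤ) = |s i + s j + sZ| →
      (∃ d e f, Cl S p r d e f ∧ 0 < 1 * (r * d + p * e)) ∧
      (∃ d e f, Cl S p r d e f ∧ 0 < (-1) * (r * d + p * e)) := by
    intro i j hZ hω n hn
    have key : ∀ g t, GoodEl S p q r g 0 0 0 0 t → ∃ d e f, Cl S p r d e f ∧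
        2 * (r * d + p * e) = t := by
      rintro g t ⟨hg, d, e, f, rfl, -, h1, h2⟩
      exact ⟨d, e, f, ⟨hg, by linarith⟩, by linarith⟩
    have hN : (0 : ℤ) < (n : ℤ) + 1 := by positivity
    have big : (n : ℤ) + 1 ≤ ((n : ℤ) + 1) * omg p r (α i) (β i) (κ i) (α j) (β j) (κ j) :=
      le_mul_of_one_le_right hN.le hω
    constructor
    · have h := (((hA i).pow n).mul ((hA j).pow n)).mul (hZ.pow n)
      have h' : GoodEl S p q r (A i ^ (n + 1) * A j ^ (n + 1) * Z ^ (n + 1)) 0 0 0 0 (((n : ℤ) + 1) * ((s i + s j + sZ) +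
          ((n : ℤ) + 1) * omg p r (α i) (β i) (κ i) (α j) (β j) (κ j))) := by
        convert h using 1 <;> (try unfold omg) <;> ring
      obtain ⟨d, e, f, hC, h2⟩ := key _ _ h'
      refine ⟨d, e, f, hC, ?_⟩
      have h3 := neg_abs_le (s i + s j + sZ)
      have := mul_pos hN (show 0 < (s i + s j + sZ) +
          ((n : ℤ) + 1) * omg p r (α i) (β i) (κ i) (α j) (β j) (κ j) by linarith)
      linarith
    · have h := (((hA j).pow n).mul ((hA i).pow n)).mul (hZ.pow n)
      have h' : GoodEl S p q r (A j ^ (n + 1) * A i ^ (n + 1) * Z ^ (n + 1)) 0 0 0 0 (((n : ℤ) + 1) * ((s i + s j + sZ) -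
          ((n : ℤ) + 1) * omg p r (α i) (β i) (κ i) (α j) (β j) (κ j))) := by
        convert h using 1 <;> (try unfold omg) <;> ring
      obtain ⟨d, e, f, hC, h2⟩ := key _ _ h'
      refine ⟨d, e, f, hC, ?_⟩
      have h3 := le_abs_self (s i + s j + sZ)
      have := mul_pos hN (show 0 < -((s i + s j + sZ) -
          ((n : ℤ) + 1) * omg p r (α i) (β i) (κ i) (α j) (β j) (κ j)) by linarith)
      linarith
  have tri2 : (∃ d e f, Cl S p r d e f ∧ 0 < 1 * (r * d + p * e)) ∧
      (∃ d e f, Cl S p r d e f ∧ 0 < (-1) * (r * d + p * e)) := by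
    rcases lt_or_gt_of_ne hω with h | h
    · refine tri j i ?_ ?_ _ (Int.natCast_natAbs _)
      · convert hZ using 1 <;> ring
      · unfold omg at h ⊢
        linarith
    · exact tri i j hZ h _ (Int.natCast_natAbs _)
  obtain ⟨⟨d, e, f, hC, hs⟩, ⟨d', e', f', hC', hs'⟩⟩ := tri2
  have B := fun x y => both_signs hpr (hA i') hV (by ring) hl hC x y
  have B' := fun x y => both_signs hpr (hA i') hV (by ring) hl hC' x y
  have b1 := B 1 1 hs (by simp) (by simp)
  have b2 := B 1 (-1) hs (by simp) (by simp)
  have b3 := B' (-1) 1 hs' (by simp) (by simp)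
  have b4 := B' (-1) (-1) hs' (by simp) (by simp)
  simp only [one_mul, neg_mul, neg_pos] at b1 b2 b3 b4
  exact quad_one hpr b1 b2 b3 b4

theorem exists_omg {k : ℕ} (hpr : 0 < p ^ 2 + r ^ 2) (α β κ : Fin k → ℤ)
    (A : Fin k → Matrix (Fin 4) (Fin 4) ℤ)
    (hA : ∀ i, phi0 (A i) = ![α i, β i, κ i])
    (hdim : Module.finrank ℝ
      (Submodule.span ℝ (coneFin (fun i => phi0R (A i)))) = 2)
    (hrel : ∀ i, p * α i + q * β i + r * κ i = 0) :
    ∃ i j, omg p r (α i) (β i) (κ i) (α j) (β j) (κ j) ≠ 0 := by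
  by_contra! H
  have cross : ∀ i j, α i * β j - α j * β i = 0 ∧ β i * κ j - β j * κ i = 0 ∧
      κ i * α j - κ j * α i = 0 := by
    intro i j
    have h1 := H i j
    unfold omg at h1
    obtain ⟨h2, h3⟩ := zero_of_sigma (p := p) (r := r) hpr
      (d := α i * β j - α j * β i) (e := β i * κ j - β j * κ i)
      (by linear_combination β j * hrel i - β i * hrel j) h1
    refine ⟨h2, h3, ?_⟩
    have : p * (κ i * α j - κ j * α i) = 0 := by
      linear_combination κ i * hrel j - κ j * hrel i + q * h3
    have h5 : r * (κ i * α j - κ j * α i) = 0 := by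
      linear_combination α j * hrel i - α i * hrel j + q * h2
    have h6 : (p ^ 2 + r ^ 2) * (κ i * α j - κ j * α i) = 0 := by
      linear_combination p * this + r * h5
    rcases mul_eq_zero.1 h6 with h | h
    · omega
    · exact h
  have sub : ∃ w : Fin 3 → ℝ, ∀ i, phi0R (A i) ∈ Submodule.span ℝ {w} := by
    by_cases h0 : ∀ i, phi0R (A i) = 0
    · exact ⟨0, fun i => by rw [h0 i]; exact Submodule.zero_mem _⟩
    push Not at h0
    obtain ⟨i, hi⟩ := h0
    refine ⟨phi0R (A i), fun j => ?_⟩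
    obtain ⟨c1, c2, c3⟩ := cross i j
    have c1' : (α i : ℝ) * β j - α j * β i = 0 := by exact_mod_cast c1
    have c2' : (β i : ℝ) * κ j - β j * κ i = 0 := by exact_mod_cast c2
    have c3' : (κ i : ℝ) * α j - κ j * α i = 0 := by exact_mod_cast c3
    have e : ∀ i, phi0R (A i) = ![(α i : ℝ), (β i : ℝ), (κ i : ℝ)] := by
      intro i
      ext m
      unfold phi0R
      rw [hA i]
      fin_cases m <;> simp
    rw [e i] at hi ⊢
    rw [e j]
    rw [Submodule.mem_span_singleton]
    by_cases ha : (α i : ℝ) = 0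
    · by_cases hb : (β i : ℝ) = 0
      · by_cases hc : (κ i : ℝ) = 0
        · exfalso
          apply hi
          ext m
          fin_cases m <;> simp [ha, hb, hc]
        · refine ⟨(κ j : ℝ) / κ i, ?_⟩
          ext m
          fin_cases m <;> simp <;> field_simp <;> linarith
      · refine ⟨(β j : ℝ) / β i, ?_⟩
        ext m
        fin_cases m <;> simp <;> field_simp <;> linarith
    · refine ⟨(α j : ℝ) / α i, ?_⟩
      ext m
      fin_cases m <;> simp <;> field_simp <;> linarith
  obtain ⟨w, hw⟩ := sub
  have hle : Submodule.span ℝ (coneFin (fun i => phi0R (A i))) ≤ Submodule.span ℝ {w} := by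
    rw [Submodule.span_le]
    rintro x ⟨ρ, -, rfl⟩
    exact Submodule.sum_mem _ fun i _ => Submodule.smul_mem _ _ (hw i)
  have h1 := Submodule.finrank_mono hle
  have h2 := finrank_span_le_card (R := ℝ) ({w} : Set (Fin 3 → ℝ))
  simp at h2
  omega

theorem exists_lam {k : ℕ} (α β κ : Fin k → ℤ)
    (hpq : ¬(p = 0 ∧ q = 0)) (hqr : ¬(q = 0 ∧ r = 0))
    (hrel : ∀ i, p * α i + q * β i + r * κ i = 0)
    (hω : ∃ i j, omg p r (α i) (β i) (κ i) (α j) (β j) (κ j) ≠ 0) :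
    ∃ i, p * α i - r * κ i ≠ 0 := by
  by_contra! H
  obtain ⟨i, j, h⟩ := hω
  apply h
  have hi := hrel i
  have hj := hrel j
  have li := H i
  have lj := H j
  unfold omg
  have k1 : r * (β i * κ j - β j * κ i) = 0 := by
    have : 2 * (r * (β i * κ j - β j * κ i)) = 0 := by
      linear_combination β i * hj - β j * hi - β i * lj + β j * li
    omega
  have k2 : p * (α i * β j - α j * β i) = 0 := by
    have : 2 * (p * (α i * β j - α j * β i)) = 0 := by
      linear_combination β j * hi - β i * hj + β j * li - β i * lj
    omega
  have k3 : p * (κ i * α j - κ j * α i) = 0 := by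
    linear_combination κ i * lj - κ j * li
  have k4 : r * (κ i * α j - κ j * α i) = 0 := by
    linear_combination α i * lj - α j * li
  have k5 : q * (α i * β j - α j * β i) = 0 := by
    linear_combination α i * hj - α j * hi + k4
  have k6 : q * (β i * κ j - β j * κ i) = 0 := by
    linear_combination κ j * hi - κ i * hj + k3
  have z1 : α i * β j - α j * β i = 0 := by
    rcases mul_eq_zero.1 k2 with h | h
    · rcases mul_eq_zero.1 k5 with h' | h'
      · exact absurd ⟨h, h'⟩ hpq
      · exact h'
    · exact h
  have z2 : β i * κ j - β j * κ i = 0 := by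
    rcases mul_eq_zero.1 k1 with h | h
    · rcases mul_eq_zero.1 k6 with h' | h'
      · exact absurd ⟨h', h⟩ hqr
      · exact h'
    · exact h
  rw [z1, z2]
  ring

end

theorem stmt18 (k : ℕ) (α β κ δ ε φ : Fin k → ℤ)
    (A : Fin k → Matrix (Fin 4) (Fin 4) ℤ)
    (hA : ∀ i, A i = UT (α i) (β i) (κ i) (δ i) (ε i) (φ i))
    (hClin : coneFin (fun i => phi0R (A i)) =
      coneFin (fun i => phi0R (A i)) ∩ -(coneFin (fun i => phi0R (A i))))
    (hdim : Module.finrank ℝ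
      (Submodule.span ℝ (coneFin (fun i => phi0R (A i)))) = 2)
    (p q r : ℤ)
    (hpq : ¬(p = 0 ∧ q = 0)) (hpr : ¬(p = 0 ∧ r = 0)) (hqr : ¬(q = 0 ∧ r = 0))
    (hrel : ∀ i, p * α i + q * β i + r * κ i = 0)
    (hsupp : ∀ j : Fin k, ∃ ℓ : Fin k → ℕ, InL0 A α β κ δ ε p r ℓ ∧ 0 < ℓ j) :
    (1 : Matrix (Fin 4) (Fin 4) ℤ) ∈ Subsemigroup.closure (Set.range A) := by
  have hK : 0 < p ^ 2 + r ^ 2 := by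
    rcases eq_or_ne p 0 with h | h
    · have : r ≠ 0 := fun h' => hpr ⟨h, h'⟩
      positivity
    · positivity
  have hphi : ∀ i, phi0 (A i) = ![α i, β i, κ i] := by
    intro i
    rw [hA i]
    ext m
    fin_cases m <;> simp [phi0, UT]
  obtain ⟨i, j, hω⟩ := exists_omg hK α β κ A hphi hdim hrel
  obtain ⟨i', hl⟩ := exists_lam α β κ hpq hqr hrel ⟨i, j, hω⟩
  set T : Fin k → ℤ := fun i => p * (2 * δ i - α i * β i) - r * (2 * ε i - β i * κ i) with hTdef
  choose L hL hLpos using hsupp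
  have La : ∀ j, ∑ i, (L j i : ℤ) * α i = 0 := by
    intro j
    have := congrFun (hL j).1 0
    simpa [Finset.sum_apply, hphi] using this
  have Lb : ∀ j, ∑ i, (L j i : ℤ) * β i = 0 := by
    intro j
    have := congrFun (hL j).1 1
    simpa [Finset.sum_apply, hphi] using this
  have Lc : ∀ j, ∑ i, (L j i : ℤ) * κ i = 0 := by
    intro j
    have := congrFun (hL j).1 2
    simpa [Finset.sum_apply, hphi] using this
  have LT : ∀ j, ∑ i, (L j i : ℤ) * T i = 0 := by
    intro j
    have h := (hL j).2
    have h2 : (∑ i, (L j i : ℚ) * (T i : ℚ)) = 0 := by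
      rw [← mul_zero (2 : ℚ), ← h, Finset.mul_sum, Finset.mul_sum, ← Finset.sum_sub_distrib,
        Finset.mul_sum]
      refine Finset.sum_congr rfl fun i _ => ?_
      rw [hTdef]
      push_cast
      ring
    exact_mod_cast h2
  have swap : ∀ x : Fin k → ℤ, (∀ j, ∑ i, (L j i : ℤ) * x i = 0) →
      ∑ i, (3 * ∑ j, (L j i : ℤ)) * x i = 0 := by
    intro x hx
    simp only [mul_assoc, Finset.sum_mul]
    rw [← Finset.mul_sum, Finset.sum_comm]
    simp [hx]
  refine core (q := q) hK A α β κ T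
    (fun i => r * (2 * δ i - α i * β i) + p * (2 * ε i - β i * κ i)) ?_
    (fun i => 3 * ∑ j, (L j i : ℤ)) ?_ (swap _ La) (swap _ Lb) (swap _ Lc) (swap _ LT)
    i j hω i' hl
  · intro i
    exact ⟨Subsemigroup.subset_closure ⟨i, rfl⟩, δ i, ε i, φ i, hA i, hrel i, rfl, rfl⟩
  · intro i
    have h1 : (L i i : ℤ) ≤ ∑ j, (L j i : ℤ) :=
      Finset.single_le_sum (f := fun j => (L j i : ℤ)) (fun j _ => by positivity)
        (Finset.mem_univ i)
    have h2 := hLpos i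
    omega
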